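/- Let ζ > 0 be the supremum of the support of g and let s_0 ∈ [0, ζ). For r ≥ 0, let r̄ denote the unique element of [0, ζ) such that r - r̄ is an integer multiple of ζ. Define g'(s) = g(s_0) + g(\overline{s_0 + s}) - 2 m_g( s_0 ∧ \overline{s_0+s}, s_0 ∨ \overline{s_0+s} ) for s ∈ [0, ζ] and g'(s) = 0 for s > ζ. Then: (a) g' is continuous with compact support and g'(0) = 0 (so T_{g'} is defined); (b) for every s, t ∈ [0, ζ], d_{g'}(s,t) = d_g(\overline{s_0+s}, \overline{s_0+t}); (c) there exists a unique isometry R from T_{g'} onto T_g such that R(p_{g'}(s)) = p_g(\overline{s_0+s}) for every s ∈ [0, ζ]. -/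

import Mathlib

/-!
If `o` does not lie strictly between `a` and `b`, then the minimum of `d_g(o, ·)` on the interval
between them is the Gromov product of `a` and `b` based at `o`, since the contour run from `a` to
`b` passes through the point where the branches from `o` to `a` and to `b` separate. As
`2 (a | b)_o = d_g(o, a) + d_g(o, b) - d_g(a, b)`, recoding the tree by `d_g(o, ·)` gives back
`d_g(a, b)`. The rerooted function reads `d_g(s₀, ·)` cyclically, first on `[s₀, ζ]` and then on
`[0, s₀]`, whose outer endpoints `ζ` and `0` both code the root. An interval across the junction is
cut there, and the minimum over it is the smaller of two Gromov products, which is again a Gromov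
product because `s₀` separates the two parameters.
-/

open Set Filter Topology Function

section Order

variable {α : Type*} [LinearOrder α] {f g : α → ℝ} {o a b x : α}

/-- The minimum `m_g(a, b)` of `g` on the interval between `a` and `b`, which may come in either
order. -/
noncomputable def intervalInf (g : α → ℝ) (a b : α) : ℝ := sInf (g '' uIcc a b)

/-- The distance `d_g(a, b)` in the tree coded by `g` between the points coded by `a` and `b`. -/
noncomputable def treeDist (g : α → ℝ) (a b : α) : ℝ := g a + g b - 2 * intervalInf g a b

/-- The Gromov product `(a | b)_o` in the tree coded by `g`: the distance from `o` to the branch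
point of `o`, `a` and `b`. -/
noncomputable def treeGromov (g : α → ℝ) (o a b : α) : ℝ :=
  (treeDist g o a + treeDist g o b - treeDist g a b) / 2

theorem intervalInf_comm (g : α → ℝ) (a b : α) : intervalInf g a b = intervalInf g b a := by
  rw [intervalInf, uIcc_comm, intervalInf]

theorem treeDist_comm (g : α → ℝ) (a b : α) : treeDist g a b = treeDist g b a := by
  rw [treeDist, intervalInf_comm, treeDist]
  ring

theorem treeGromov_comm (g : α → ℝ) (o a b : α) : treeGromov g o a b = treeGromov g o b a := by
  rw [treeGromov, treeDist_comm g a b, treeGromov]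
  ring

theorem intervalInf_self (g : α → ℝ) (a : α) : intervalInf g a a = g a := by
  simp [intervalInf]

theorem treeDist_self (g : α → ℝ) (a : α) : treeDist g a a = 0 := by
  rw [treeDist, intervalInf_self]
  ring

theorem intervalInf_congr (h : EqOn f g (uIcc a b)) : intervalInf f a b = intervalInf g a b := by
  rw [intervalInf, h.image_eq, intervalInf]

theorem intervalInf_eq_zero (hg₀ : ∀ y, 0 ≤ g y) (hx : x ∈ uIcc a b) (hgx : g x = 0) :
    intervalInf g a b = 0 :=
  IsLeast.csInf_eq ⟨⟨x, hx, hgx⟩, forall_mem_image.2 fun y _ => hg₀ y⟩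

theorem treeDist_of_right_eq_zero (hg₀ : ∀ y, 0 ≤ g y) (a : α) (hb : g b = 0) :
    treeDist g a b = g a := by
  rw [treeDist, intervalInf_eq_zero hg₀ right_mem_uIcc hb, hb]
  ring

theorem treeGromov_congr {a' b' : α} (ha : ∀ y, treeDist g y a = treeDist g y a')
    (hb : ∀ y, treeDist g y b = treeDist g y b') : treeGromov g o a b = treeGromov g o a' b' := by
  rw [treeGromov, ha, hb, hb, treeDist_comm g a, ha, treeDist_comm g b', treeGromov]

theorem treeGromov_eq (g : α → ℝ) (o a b : α) :
    treeGromov g o a b = g o - intervalInf g o a - intervalInf g o b + intervalInf g a b := by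
  simp only [treeGromov, treeDist]
  ring

theorem treeGromov_of_right_eq_zero (hg₀ : ∀ y, 0 ≤ g y) (o a : α) (hb : g b = 0) :
    treeGromov g o a b = g o - intervalInf g o a := by
  rw [treeGromov_eq, intervalInf_eq_zero hg₀ right_mem_uIcc hb,
    intervalInf_eq_zero hg₀ right_mem_uIcc hb]
  ring

end Order

section CompactIntervals

variable {α : Type*} [LinearOrder α] [TopologicalSpace α] [CompactIccSpace α]
  {g : α → ℝ} {o a b c x : α}

theorem exists_mem_uIcc_eq_intervalInf (hg : Continuous g) (a b : α) :
    ∃ c ∈ uIcc a b, g c = intervalInf g a b := by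
  obtain ⟨c, hc, h⟩ := isCompact_uIcc.exists_sInf_image_eq nonempty_uIcc hg.continuousOn
  exact ⟨c, hc, h.symm⟩

theorem intervalInf_le (hg : Continuous g) (hx : x ∈ uIcc a b) : intervalInf g a b ≤ g x :=
  csInf_le (isCompact_uIcc.image hg).bddBelow (mem_image_of_mem g hx)

theorem intervalInf_anti (hg : Continuous g) {a' b' : α} (h : uIcc a' b' ⊆ uIcc a b) :
    intervalInf g a b ≤ intervalInf g a' b' := by
  obtain ⟨c, hc, hgc⟩ := exists_mem_uIcc_eq_intervalInf hg a' b'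
  exact hgc ▸ intervalInf_le hg (h hc)

theorem min_intervalInf_le (hg : Continuous g) (a b c : α) :
    min (intervalInf g a b) (intervalInf g b c) ≤ intervalInf g a c := by
  obtain ⟨x, hx, hgx⟩ := exists_mem_uIcc_eq_intervalInf hg a c
  rw [← hgx]
  rcases uIcc_subset_uIcc_union_uIcc (b := b) hx with h | h
  · exact min_le_of_left_le (intervalInf_le hg h)
  · exact min_le_of_right_le (intervalInf_le hg h)

theorem intervalInf_eq_min (hg : Continuous g) (hb : b ∈ uIcc a c) :
    intervalInf g a c = min (intervalInf g a b) (intervalInf g b c) :=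
  le_antisymm
    (le_min (intervalInf_anti hg (uIcc_subset_uIcc_left hb))
      (intervalInf_anti hg (uIcc_subset_uIcc_right hb)))
    (min_intervalInf_le hg a b c)

theorem treeDist_nonneg (hg : Continuous g) (a b : α) : 0 ≤ treeDist g a b := by
  have ha := intervalInf_le hg (left_mem_uIcc (a := a) (b := b))
  have hb := intervalInf_le hg (right_mem_uIcc (a := a) (b := b))
  rw [treeDist]
  linarith

theorem treeDist_triangle (hg : Continuous g) (a b c : α) :
    treeDist g a c ≤ treeDist g a b + treeDist g b c := by
  have hab := intervalInf_le hg (right_mem_uIcc (a := a) (b := b))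
  have hbc := intervalInf_le hg (left_mem_uIcc (a := b) (b := c))
  have hmax := max_le hab hbc
  have hmin := min_intervalInf_le hg a b c
  have hsum := min_add_max (intervalInf g a b) (intervalInf g b c)
  simp only [treeDist]
  linarith

theorem treeGromov_le_treeDist (hg : Continuous g) (ha : a ∈ uIcc o b) (hx : x ∈ uIcc a b) :
    treeGromov g o a b ≤ treeDist g o x := by
  have hax : a ∈ uIcc o x := by grind [mem_uIcc]
  have hab : intervalInf g a b ≤ intervalInf g a x := intervalInf_anti hg (uIcc_subset_uIcc_left hx)
  have hgx : intervalInf g a x ≤ g x := intervalInf_le hg right_mem_uIcc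
  rw [treeGromov_eq, treeDist, intervalInf_eq_min hg ha, intervalInf_eq_min hg hax]
  grind

theorem treeGromov_eq_sub_max (hg : Continuous g) (ho : o ∈ uIcc a b) :
    treeGromov g o a b = g o - max (intervalInf g o a) (intervalInf g o b) := by
  rw [treeGromov_eq, intervalInf_eq_min hg ho, intervalInf_comm g a o]
  linarith [min_add_max (intervalInf g o a) (intervalInf g o b)]

end CompactIntervals

section OrderTopology

variable {α : Type*} [LinearOrder α] [TopologicalSpace α] [OrderTopology α] [CompactIccSpace α]
  {g : α → ℝ}

theorem tendsto_intervalInf_self (hg : Continuous g) (a : α) :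
    Tendsto (intervalInf g a) (𝓝 a) (𝓝 (g a)) := by
  choose c hc hgc using exists_mem_uIcc_eq_intervalInf hg a
  have hmin : Tendsto (min a) (𝓝 a) (𝓝 a) :=
    (continuous_const.min continuous_id).tendsto' a a (min_self a)
  have hmax : Tendsto (max a) (𝓝 a) (𝓝 a) :=
    (continuous_const.max continuous_id).tendsto' a a (max_self a)
  have hca : Tendsto c (𝓝 a) (𝓝 a) :=
    tendsto_of_tendsto_of_tendsto_of_le_of_le hmin hmax (fun x => (hc x).1) fun x => (hc x).2
  exact ((hg.tendsto a).comp hca).congr hgc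

theorem continuous_treeDist_right (hg : Continuous g) (a : α) : Continuous (treeDist g a) := by
  refine continuous_iff_continuousAt.2 fun b => tendsto_iff_dist_tendsto_zero.2 ?_
  have hb : Tendsto (treeDist g b) (𝓝 b) (𝓝 0) := by
    have h := ((hg.tendsto b).const_add (g b)).sub
      ((tendsto_intervalInf_self hg b).const_mul 2)
    rwa [← two_mul, sub_self] at h
  refine squeeze_zero (fun _ => dist_nonneg) (fun x => ?_) hb
  rw [Real.dist_eq, abs_sub_le_iff]
  constructor
  · linarith [treeDist_triangle hg a b x]
  · linarith [treeDist_triangle hg a x b, treeDist_comm g x b]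

theorem continuous_intervalInf_right (hg : Continuous g) (a : α) :
    Continuous (intervalInf g a) := by
  have h : intervalInf g a = fun x => (g a + g x - treeDist g a x) / 2 := by
    funext x
    rw [treeDist]
    ring
  have hd := continuous_treeDist_right hg a
  rw [h]
  fun_prop

end OrderTopology

section DenseOrder

variable {α : Type*} [ConditionallyCompleteLinearOrder α] [TopologicalSpace α] [OrderTopology α]
  [DenselyOrdered α] {g : α → ℝ} {o a b : α} {y : ℝ}

theorem exists_eq_and_intervalInf_eq (hg : Continuous g) (hy : y ∈ Icc (intervalInf g a b) (g a)) :
    ∃ c ∈ uIcc a b, g c = y ∧ intervalInf g a c = y := by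
  have hy' : y ∈ uIcc (intervalInf g a a) (intervalInf g a b) := by
    rw [intervalInf_self]
    exact Icc_subset_uIcc' hy
  obtain ⟨x, hx, rfl⟩ :=
    intermediate_value_uIcc (continuous_intervalInf_right hg a).continuousOn hy'
  obtain ⟨c, hc, hgc⟩ := exists_mem_uIcc_eq_intervalInf hg a x
  refine ⟨c, uIcc_subset_uIcc_left hx hc, hgc, le_antisymm ?_ ?_⟩
  · exact hgc ▸ intervalInf_le hg right_mem_uIcc
  · exact intervalInf_anti hg (uIcc_subset_uIcc_left hc)

theorem exists_treeDist_eq_treeGromov (hg : Continuous g) (ha : a ∈ uIcc o b) :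
    ∃ c ∈ uIcc a b, treeDist g o c = treeGromov g o a b := by
  have hoa : intervalInf g o a ≤ g a := intervalInf_le hg right_mem_uIcc
  have hab : intervalInf g a b ≤ g a := intervalInf_le hg left_mem_uIcc
  -- The branch point of `o`, `a`, `b` has height `max (m_g(o, a)) (m_g(a, b))`.
  obtain ⟨c, hc, hgc, hac⟩ :=
    exists_eq_and_intervalInf_eq hg ⟨le_max_right (intervalInf g o a) _, max_le hoa hab⟩
  have hoc : a ∈ uIcc o c := by grind [mem_uIcc]
  refine ⟨c, hc, ?_⟩
  rw [treeGromov_eq, treeDist, intervalInf_eq_min hg ha, intervalInf_eq_min hg hoc, hgc, hac,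
    min_eq_left (le_max_left _ _)]
  linarith [min_add_max (intervalInf g o a) (intervalInf g a b)]

theorem intervalInf_treeDist (hg : Continuous g) (ha : a ∈ uIcc o b) :
    intervalInf (treeDist g o) a b = treeGromov g o a b :=
  IsLeast.csInf_eq ⟨exists_treeDist_eq_treeGromov hg ha,
    forall_mem_image.2 fun _ hx => treeGromov_le_treeDist hg ha hx⟩

theorem intervalInf_treeDist' (hg : Continuous g) (hb : b ∈ uIcc o a) :
    intervalInf (treeDist g o) a b = treeGromov g o a b := by
  rw [intervalInf_comm, intervalInf_treeDist hg hb, treeGromov_comm]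

end DenseOrder

theorem intervalInf_comp_const_add {α : Type*} [AddCommGroup α] [LinearOrder α]
    [IsOrderedAddMonoid α] (f : α → ℝ) (k a b : α) :
    intervalInf (fun x => f (k + x)) a b = intervalInf f (k + a) (k + b) := by
  rw [intervalInf, intervalInf, ← image_const_add_uIcc, image_image]

theorem toIcoMod_zero_eq_sub_mul_floor {𝕜 : Type*} [Field 𝕜] [LinearOrder 𝕜]
    [IsStrictOrderedRing 𝕜] [FloorRing 𝕜] {ζ : 𝕜} (hζ : 0 < ζ) (r : 𝕜) :
    toIcoMod hζ 0 r = r - ζ * ⌊r / ζ⌋ := by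
  rw [toIcoMod_eq_fract_mul, Int.fract, sub_mul, div_mul_cancel₀ r hζ.ne', mul_comm ζ]

theorem exists_toIcoMod_add_eq {α : Type*} [AddCommGroup α] [LinearOrder α]
    [IsOrderedAddMonoid α] [Archimedean α] {ζ : α} (hζ : 0 < ζ) (s₀ r : α) :
    ∃ s ∈ Icc 0 ζ, toIcoMod hζ 0 (s₀ + s) = toIcoMod hζ 0 r := by
  refine ⟨toIcoMod hζ 0 (r - s₀), Ico_subset_Icc_self (toIcoMod_mem_Ico' hζ _), ?_⟩
  exact (toIcoMod_eq_toIcoMod hζ).2 ⟨toIcoDiv hζ 0 (r - s₀), by rw [toIcoMod]; abel⟩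

section CyclicShift

variable {g : ℝ → ℝ} {ζ s₀ r s t : ℝ}

/-- The function coding the tree of `g` rerooted at the point coded by `s₀`; here `toIcoMod hζ 0`
is the reduction `r ↦ r̄` modulo `ζ` to `[0, ζ)`. -/
noncomputable def reroot (g : ℝ → ℝ) (hζ : 0 < ζ) (s₀ : ℝ) : ℝ → ℝ :=
  (Icc 0 ζ).indicator fun s => treeDist g s₀ (toIcoMod hζ 0 (s₀ + s))

theorem reroot_apply (g : ℝ → ℝ) (hζ : 0 < ζ) (s₀ s : ℝ) : reroot g hζ s₀ s =
    if 0 ≤ s ∧ s ≤ ζ then treeDist g s₀ (toIcoMod hζ 0 (s₀ + s)) else 0 := by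
  simp only [reroot, indicator_apply, mem_Icc]

theorem treeDist_toIcoMod_of_mem_Icc (hg₀ : ∀ x, 0 ≤ g x) (h0 : g 0 = 0) (hgζ : g ζ = 0)
    (hζ : 0 < ζ) (x : ℝ) (hr : r ∈ Icc 0 ζ) :
    treeDist g x (toIcoMod hζ 0 r) = treeDist g x r := by
  rcases hr.2.eq_or_lt with rfl | hlt
  · have hbar : toIcoMod hζ 0 r = 0 := by simpa only [zero_add] using toIcoMod_apply_right hζ 0
    rw [hbar, treeDist_of_right_eq_zero hg₀ x h0, treeDist_of_right_eq_zero hg₀ x hgζ]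
  · rw [(toIcoMod_eq_self hζ).2 (by rw [zero_add]; exact ⟨hr.1, hlt⟩)]

theorem continuous_treeDist_toIcoMod (hg : Continuous g) (hg₀ : ∀ x, 0 ≤ g x) (h0 : g 0 = 0)
    (hgζ : g ζ = 0) (hζ : 0 < ζ) (x : ℝ) :
    Continuous fun r => treeDist g x (toIcoMod hζ 0 r) := by
  have : Fact (0 < ζ) := ⟨hζ⟩
  have hends : treeDist g x 0 = treeDist g x ζ := by
    rw [treeDist_of_right_eq_zero hg₀ x h0, treeDist_of_right_eq_zero hg₀ x hgζ]
  exact (AddCircle.liftIco_zero_continuous hends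
    (continuous_treeDist_right hg x).continuousOn).comp (AddCircle.continuous_mk' ζ)

theorem reroot_nonneg (hg : Continuous g) (hζ : 0 < ζ) (s₀ s : ℝ) : 0 ≤ reroot g hζ s₀ s :=
  indicator_nonneg (fun _ _ => treeDist_nonneg hg _ _) s

theorem hasCompactSupport_reroot (g : ℝ → ℝ) (hζ : 0 < ζ) (s₀ : ℝ) :
    HasCompactSupport (reroot g hζ s₀) :=
  HasCompactSupport.intro isCompact_Icc fun _ hs => indicator_of_notMem hs _

theorem treeDist_toIcoMod_add_of_le (hg₀ : ∀ x, 0 ≤ g x) (h0 : g 0 = 0) (hgζ : g ζ = 0)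
    (hζ : 0 < ζ) (hs₀ : 0 ≤ s₀) (hs : s ∈ Icc 0 (ζ - s₀)) (x : ℝ) :
    treeDist g x (toIcoMod hζ 0 (s₀ + s)) = treeDist g x (s₀ + s) :=
  treeDist_toIcoMod_of_mem_Icc hg₀ h0 hgζ hζ x ⟨add_nonneg hs₀ hs.1, by linarith [hs.2]⟩

theorem treeDist_toIcoMod_add_of_ge (hg₀ : ∀ x, 0 ≤ g x) (h0 : g 0 = 0) (hgζ : g ζ = 0)
    (hζ : 0 < ζ) (hs₀ : s₀ ≤ ζ) (hs : s ∈ Icc (ζ - s₀) ζ) (x : ℝ) :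
    treeDist g x (toIcoMod hζ 0 (s₀ + s)) = treeDist g x (s₀ - ζ + s) := by
  have hbar : toIcoMod hζ 0 (s₀ + s) = toIcoMod hζ 0 (s₀ - ζ + s) := by
    rw [← toIcoMod_sub, add_sub_right_comm]
  rw [hbar, treeDist_toIcoMod_of_mem_Icc hg₀ h0 hgζ hζ x
    ⟨by linarith [hs.1], by linarith [hs.2]⟩]

theorem reroot_zero (hg₀ : ∀ x, 0 ≤ g x) (h0 : g 0 = 0) (hgζ : g ζ = 0) (hζ : 0 < ζ)
    (hs₀ : s₀ ∈ Icc 0 ζ) : reroot g hζ s₀ 0 = 0 := by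
  rw [reroot, indicator_of_mem (left_mem_Icc.2 hζ.le), add_zero,
    treeDist_toIcoMod_of_mem_Icc hg₀ h0 hgζ hζ s₀ hs₀, treeDist_self]

theorem continuous_reroot (hg : Continuous g) (hg₀ : ∀ x, 0 ≤ g x) (h0 : g 0 = 0)
    (hgζ : g ζ = 0) (hζ : 0 < ζ) (hs₀ : s₀ ∈ Icc 0 ζ) : Continuous (reroot g hζ s₀) := by
  have hbar : treeDist g s₀ (toIcoMod hζ 0 s₀) = 0 := by
    rw [treeDist_toIcoMod_of_mem_Icc hg₀ h0 hgζ hζ s₀ hs₀, treeDist_self]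
  refine Continuous.indicator ?_
    ((continuous_treeDist_toIcoMod hg hg₀ h0 hgζ hζ s₀).comp (continuous_const_add s₀))
  rw [frontier_Icc hζ.le]
  rintro s (rfl | rfl)
  · rwa [add_zero]
  · rwa [toIcoMod_add_right]

theorem intervalInf_reroot_of_le (hg : Continuous g) (hg₀ : ∀ x, 0 ≤ g x) (h0 : g 0 = 0)
    (hgζ : g ζ = 0) (hζ : 0 < ζ) (hs₀ : 0 ≤ s₀) (hs : 0 ≤ s) (hst : s ≤ t) (ht : t ≤ ζ - s₀) :
    intervalInf (reroot g hζ s₀) s t = treeGromov g s₀ (s₀ + s) (s₀ + t) := by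
  have heq : EqOn (reroot g hζ s₀) (fun x => treeDist g s₀ (s₀ + x)) (uIcc s t) := by
    intro x hx
    rw [uIcc_of_le hst] at hx
    have hx' : x ∈ Icc 0 (ζ - s₀) := ⟨hs.trans hx.1, hx.2.trans ht⟩
    have hxζ : x ∈ Icc 0 ζ := ⟨hx'.1, by linarith [hx'.2]⟩
    rw [reroot, indicator_of_mem hxζ,
      treeDist_toIcoMod_add_of_le hg₀ h0 hgζ hζ hs₀ hx']
  rw [intervalInf_congr heq, intervalInf_comp_const_add,
    intervalInf_treeDist hg (mem_uIcc.2 (.inl ⟨by linarith, by linarith⟩))]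

theorem intervalInf_reroot_of_ge (hg : Continuous g) (hg₀ : ∀ x, 0 ≤ g x) (h0 : g 0 = 0)
    (hgζ : g ζ = 0) (hζ : 0 < ζ) (hs₀ : s₀ ≤ ζ) (hs : ζ - s₀ ≤ s) (hst : s ≤ t) (ht : t ≤ ζ) :
    intervalInf (reroot g hζ s₀) s t = treeGromov g s₀ (s₀ - ζ + s) (s₀ - ζ + t) := by
  have heq : EqOn (reroot g hζ s₀) (fun x => treeDist g s₀ (s₀ - ζ + x)) (uIcc s t) := by
    intro x hx
    rw [uIcc_of_le hst] at hx
    have hx' : x ∈ Icc (ζ - s₀) ζ := ⟨hs.trans hx.1, hx.2.trans ht⟩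
    have hxζ : x ∈ Icc 0 ζ := ⟨by linarith [hx'.1], hx'.2⟩
    rw [reroot, indicator_of_mem hxζ,
      treeDist_toIcoMod_add_of_ge hg₀ h0 hgζ hζ hs₀ hx']
  rw [intervalInf_congr heq, intervalInf_comp_const_add,
    intervalInf_treeDist' hg (mem_uIcc.2 (.inr ⟨by linarith, by linarith⟩))]

theorem intervalInf_reroot_across (hg : Continuous g) (hg₀ : ∀ x, 0 ≤ g x) (h0 : g 0 = 0)
    (hgζ : g ζ = 0) (hζ : 0 < ζ) (hs₀ : s₀ ∈ Icc 0 ζ) (hs : s ∈ Icc 0 (ζ - s₀))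
    (ht : t ∈ Icc (ζ - s₀) ζ) :
    intervalInf (reroot g hζ s₀) s t = treeGromov g s₀ (s₀ + s) (s₀ - ζ + t) := by
  have hcut : ζ - s₀ ∈ uIcc s t := mem_uIcc.2 (.inl ⟨hs.2, ht.1⟩)
  have hbetween : s₀ ∈ uIcc (s₀ + s) (s₀ - ζ + t) :=
    mem_uIcc.2 (.inr ⟨by linarith [ht.2], by linarith [hs.1]⟩)
  have hleft : intervalInf (reroot g hζ s₀) s (ζ - s₀) = g s₀ - intervalInf g s₀ (s₀ + s) := by
    rw [intervalInf_reroot_of_le hg hg₀ h0 hgζ hζ hs₀.1 hs.1 hs.2 le_rfl, add_sub_cancel,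
      treeGromov_of_right_eq_zero hg₀ _ _ hgζ]
  have hright : intervalInf (reroot g hζ s₀) (ζ - s₀) t =
      g s₀ - intervalInf g s₀ (s₀ - ζ + t) := by
    rw [intervalInf_reroot_of_ge hg hg₀ h0 hgζ hζ hs₀.2 le_rfl ht.1 ht.2, treeGromov_comm,
      sub_add_sub_cancel', sub_self, treeGromov_of_right_eq_zero hg₀ _ _ h0]
  rw [intervalInf_eq_min (continuous_reroot hg hg₀ h0 hgζ hζ hs₀) hcut, hleft, hright,
    treeGromov_eq_sub_max hg hbetween, min_sub_sub_left]

theorem intervalInf_reroot (hg : Continuous g) (hg₀ : ∀ x, 0 ≤ g x) (h0 : g 0 = 0)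
    (hgζ : g ζ = 0) (hζ : 0 < ζ) (hs₀ : s₀ ∈ Icc 0 ζ) (hs : 0 ≤ s) (hst : s ≤ t) (ht : t ≤ ζ) :
    intervalInf (reroot g hζ s₀) s t =
      treeGromov g s₀ (toIcoMod hζ 0 (s₀ + s)) (toIcoMod hζ 0 (s₀ + t)) := by
  have before {r : ℝ} (hr : r ∈ Icc 0 (ζ - s₀)) (x : ℝ) :=
    treeDist_toIcoMod_add_of_le hg₀ h0 hgζ hζ hs₀.1 hr x
  have after {r : ℝ} (hr : r ∈ Icc (ζ - s₀) ζ) (x : ℝ) :=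
    treeDist_toIcoMod_add_of_ge hg₀ h0 hgζ hζ hs₀.2 hr x
  rcases le_total t (ζ - s₀) with htc | htc
  · rw [intervalInf_reroot_of_le hg hg₀ h0 hgζ hζ hs₀.1 hs hst htc,
      treeGromov_congr (before ⟨hs, hst.trans htc⟩) (before ⟨hs.trans hst, htc⟩)]
  rcases le_total s (ζ - s₀) with hsc | hsc
  · rw [intervalInf_reroot_across hg hg₀ h0 hgζ hζ hs₀ ⟨hs, hsc⟩ ⟨htc, ht⟩,
      treeGromov_congr (before ⟨hs, hsc⟩) (after ⟨htc, ht⟩)]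
  · rw [intervalInf_reroot_of_ge hg hg₀ h0 hgζ hζ hs₀.2 hsc hst ht,
      treeGromov_congr (after ⟨hsc, hst.trans ht⟩) (after ⟨htc, ht⟩)]

theorem treeDist_reroot (hg : Continuous g) (hg₀ : ∀ x, 0 ≤ g x) (h0 : g 0 = 0)
    (hgζ : g ζ = 0) (hζ : 0 < ζ) (hs₀ : s₀ ∈ Icc 0 ζ) (hs : s ∈ Icc 0 ζ) (ht : t ∈ Icc 0 ζ) :
    treeDist (reroot g hζ s₀) s t =
      treeDist g (toIcoMod hζ 0 (s₀ + s)) (toIcoMod hζ 0 (s₀ + t)) := by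
  wlog hst : s ≤ t generalizing s t
  · rw [treeDist_comm, this ht hs (le_of_not_ge hst), treeDist_comm]
  rw [treeDist, intervalInf_reroot hg hg₀ h0 hgζ hζ hs₀ hs.1 hst ht.2, reroot,
    indicator_of_mem hs, indicator_of_mem ht, treeGromov]
  ring

end CyclicShift

section Realization

variable {α T : Type*} [LinearOrder α] [MetricSpace T] {g : α → ℝ} {p : α → T}

/-- `p` realizes the metric space `T` as the tree `T_g` coded by `g`, with `p` as the canonical
projection. This describes the quotient of `α` by `d_g = 0` up to isometry. -/
structure IsTreeProjection (g : α → ℝ) (p : α → T) : Prop where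
  surjective : Surjective p
  dist_eq : ∀ a b, dist (p a) (p b) = treeDist g a b

theorem IsTreeProjection.apply_eq_iff (hp : IsTreeProjection g p) {a b : α} :
    p a = p b ↔ treeDist g a b = 0 := by
  rw [← hp.dist_eq, dist_eq_zero]

theorem IsTreeProjection.exists_mem_eq (hp : IsTreeProjection g p) (hg₀ : ∀ a, 0 ≤ g a)
    {S : Set α} (hS : support g ⊆ S) {c : α} (hc : c ∈ S) (hgc : g c = 0) (x : T) :
    ∃ a ∈ S, p a = x := by
  obtain ⟨a, rfl⟩ := hp.surjective x
  by_cases ha : a ∈ S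
  · exact ⟨a, ha, rfl⟩
  · have hga : g a = 0 := notMem_support.1 (notMem_subset hS ha)
    exact ⟨c, hc, hp.apply_eq_iff.2 ((treeDist_of_right_eq_zero hg₀ c hga).trans hgc)⟩

end Realization

theorem existsUnique_isometry_of_dist_eq {ι T T' : Type*} [MetricSpace T] [PseudoMetricSpace T']
    {q : ι → T} {q' : ι → T'} (hq : Surjective q) (hq' : Surjective q')
    (h : ∀ i j, dist (q' i) (q' j) = dist (q i) (q j)) :
    ∃! R : T' → T, Isometry R ∧ Surjective R ∧ ∀ i, R (q' i) = q i := by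
  have hR (i : ι) : q (surjInv hq' (q' i)) = q i := by
    rw [← dist_eq_zero, ← h, surjInv_eq hq', dist_self]
  refine ⟨q ∘ surjInv hq', ⟨Isometry.of_dist_eq fun x y => ?_, fun x => ?_, hR⟩, ?_⟩
  · rw [comp_apply, comp_apply, ← h, surjInv_eq hq', surjInv_eq hq']
  · obtain ⟨i, rfl⟩ := hq x
    exact ⟨q' i, hR i⟩
  · rintro R ⟨-, -, hR'⟩
    funext x
    rw [comp_apply, ← hR', surjInv_eq hq']

theorem eq_zero_of_support_subset_Icc {α : Type*} [LinearOrder α] [TopologicalSpace α]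
    [OrderTopology α] [DenselyOrdered α] [NoMinOrder α] [NoMaxOrder α] {g : α → ℝ} {a b : α}
    (hg : Continuous g) (hgab : support g ⊆ Icc a b) : g a = 0 ∧ g b = 0 := by
  have hIoo : support g ⊆ Ioo a b := by
    rw [← interior_Icc]
    exact interior_maximal hgab hg.isOpen_support
  exact ⟨notMem_support.1 fun h => left_notMem_Ioo (hIoo h),
    notMem_support.1 fun h => right_notMem_Ioo (hIoo h)⟩

theorem existsUnique_isometry_reroot {g : ℝ → ℝ} (hg : Continuous g) (hg₀ : ∀ x, 0 ≤ g x)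
    {ζ : ℝ} (hζ : 0 < ζ) (hgζ : support g ⊆ Icc 0 ζ) {s₀ : ℝ} (hs₀ : s₀ ∈ Icc 0 ζ)
    {T T' : Type*} [MetricSpace T] [MetricSpace T'] {p : ℝ → T} {p' : ℝ → T'}
    (hp : IsTreeProjection g p) (hp' : IsTreeProjection (reroot g hζ s₀) p') :
    ∃! R : T' → T, Isometry R ∧ Surjective R ∧
      ∀ s ∈ Icc 0 ζ, R (p' s) = p (toIcoMod hζ 0 (s₀ + s)) := by
  obtain ⟨h0, hζ0⟩ := eq_zero_of_support_subset_Icc hg hgζ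
  have h0mem : (0 : ℝ) ∈ Icc 0 ζ := left_mem_Icc.2 hζ.le
  have hq : Surjective fun s : Icc 0 ζ => p (toIcoMod hζ 0 (s₀ + s)) := by
    intro x
    obtain ⟨r, hr, rfl⟩ := hp.exists_mem_eq hg₀ hgζ h0mem h0 x
    obtain ⟨s, hs, hsr⟩ := exists_toIcoMod_add_eq hζ s₀ r
    refine ⟨⟨s, hs⟩, hp.apply_eq_iff.2 ?_⟩
    rw [hsr, treeDist_comm, treeDist_toIcoMod_of_mem_Icc hg₀ h0 hζ0 hζ r hr, treeDist_self]
  have hq' : Surjective fun s : Icc 0 ζ => p' s := by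
    intro x
    obtain ⟨s, hs, rfl⟩ := hp'.exists_mem_eq (reroot_nonneg hg hζ s₀) support_indicator_subset
      h0mem (reroot_zero hg₀ h0 hζ0 hζ hs₀) x
    exact ⟨⟨s, hs⟩, rfl⟩
  have hdist (s t : Icc 0 ζ) : dist (p' s) (p' t) =
      dist (p (toIcoMod hζ 0 (s₀ + s))) (p (toIcoMod hζ 0 (s₀ + t))) := by
    rw [hp'.dist_eq, hp.dist_eq, treeDist_reroot hg hg₀ h0 hζ0 hζ hs₀ s.2 t.2]
  simpa only [Subtype.forall] using existsUnique_isometry_of_dist_eq hq hq' hdist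

theorem support_subset_Icc_sSup {α M : Type*} [ConditionallyCompleteLinearOrder α]
    [TopologicalSpace α] [OrderTopology α] [Nonempty α] [Zero M] {g : α → M} {a : α}
    (hga : ∀ x ≤ a, g x = 0) (hg : HasCompactSupport g) :
    support g ⊆ Icc a (sSup (support g)) := by
  have hbdd : BddAbove (support g) := hg.isCompact.bddAbove.mono (subset_tsupport g)
  exact fun x hx => ⟨le_of_not_ge fun h => hx (hga x h), le_csSup hbdd hx⟩

theorem stmt14_general {g : ℝ → ℝ} (hg : Continuous g) (hg₀ : ∀ x, 0 ≤ g x) {ζ : ℝ}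
    (hζ : 0 < ζ) (hgζ : support g ⊆ Icc 0 ζ) {s₀ : ℝ} (hs₀ : s₀ ∈ Icc 0 ζ) :
    (Continuous (reroot g hζ s₀) ∧ HasCompactSupport (reroot g hζ s₀) ∧ reroot g hζ s₀ 0 = 0) ∧
    (∀ s t : ℝ, 0 ≤ s → s ≤ ζ → 0 ≤ t → t ≤ ζ → treeDist (reroot g hζ s₀) s t =
      treeDist g (toIcoMod hζ 0 (s₀ + s)) (toIcoMod hζ 0 (s₀ + t))) ∧
    (∀ (T T' : Type*) [MetricSpace T] [MetricSpace T'] (p : ℝ → T) (p' : ℝ → T'),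
      Surjective p → Surjective p' →
      (∀ s t, dist (p s) (p t) = treeDist g s t) →
      (∀ s t, dist (p' s) (p' t) = treeDist (reroot g hζ s₀) s t) →
      ∃! R : T' → T, Isometry R ∧ Surjective R ∧
        ∀ s : ℝ, 0 ≤ s → s ≤ ζ → R (p' s) = p (toIcoMod hζ 0 (s₀ + s))) := by
  obtain ⟨h0, hζ0⟩ := eq_zero_of_support_subset_Icc hg hgζ
  refine ⟨⟨continuous_reroot hg hg₀ h0 hζ0 hζ hs₀, hasCompactSupport_reroot g hζ s₀,
    reroot_zero hg₀ h0 hζ0 hζ hs₀⟩, ?_, ?_⟩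
  · intro s t hs hsζ ht htζ
    exact treeDist_reroot hg hg₀ h0 hζ0 hζ hs₀ ⟨hs, hsζ⟩ ⟨ht, htζ⟩
  · intro T T' _ _ p p' hp hp' hd hd'
    simpa only [mem_Icc, and_imp] using
      existsUnique_isometry_reroot hg hg₀ hζ hgζ hs₀ ⟨hp, hd⟩ ⟨hp', hd'⟩

/-- Lemma 2.3 (re-rooting): let `g` be continuous, nonnegative, with compact support,
vanishing on `(-∞,0]`, not identically zero, let `ζ > 0` be the supremum of its support, let
`s₀ ∈ [0,ζ)`, and let `r̄ = r - ζ⌊r/ζ⌋` be the representative of `r` modulo `ζ` in `[0,ζ)`.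
Define `g'(s) = g(s₀) + g(\overline{s₀+s}) - 2 m_g(s₀, \overline{s₀+s})` for `s ∈ [0,ζ]` and
`g'(s) = 0` otherwise. Then: (a) `g'` is continuous with compact support and `g'(0) = 0`;
(b) `d_{g'}(s,t) = d_g(\overline{s₀+s}, \overline{s₀+t})` for `s, t ∈ [0,ζ]`; (c) for any
metric-space realizations `(T, p)` of `T_g` and `(T', p')` of `T_{g'}` there is a unique
isometry `R` from `T_{g'}` onto `T_g` with `R(p_{g'}(s)) = p_g(\overline{s₀+s})` for
`s ∈ [0,ζ]`. -/
theorem stmt14 (g : ℝ → ℝ) (hg_cont : Continuous g) (hg_nonneg : ∀ x, 0 ≤ g x)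
    (hg_neg : ∀ x ≤ (0 : ℝ), g x = 0) (hg_supp : HasCompactSupport g) (hg_ne : g ≠ 0)
    (ζ : ℝ) (hζ_pos : 0 < ζ) (hζ : ζ = sSup (Function.support g))
    (s₀ : ℝ) (hs₀ : 0 ≤ s₀) (hs₀' : s₀ < ζ)
    (bar : ℝ → ℝ) (hbar : ∀ r : ℝ, bar r = r - ζ * (⌊r / ζ⌋ : ℝ))
    (g' : ℝ → ℝ)
    (hg' : ∀ s : ℝ, g' s =
      if 0 ≤ s ∧ s ≤ ζ then
        g s₀ + g (bar (s₀ + s)) -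
          2 * sInf (g '' Set.Icc (min s₀ (bar (s₀ + s))) (max s₀ (bar (s₀ + s))))
      else 0) :
    (Continuous g' ∧ HasCompactSupport g' ∧ g' 0 = 0) ∧
    (∀ s t : ℝ, 0 ≤ s → s ≤ ζ → 0 ≤ t → t ≤ ζ →
      g' s + g' t - 2 * sInf (g' '' Set.Icc (min s t) (max s t)) =
        g (bar (s₀ + s)) + g (bar (s₀ + t)) -
          2 * sInf (g '' Set.Icc (min (bar (s₀ + s)) (bar (s₀ + t)))
            (max (bar (s₀ + s)) (bar (s₀ + t))))) ∧
    (∀ (T T' : Type) [MetricSpace T] [MetricSpace T']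
      (p : ℝ → T) (p' : ℝ → T'),
      Function.Surjective p → Function.Surjective p' →
      (∀ s t : ℝ, dist (p s) (p t) =
        g s + g t - 2 * sInf (g '' Set.Icc (min s t) (max s t))) →
      (∀ s t : ℝ, dist (p' s) (p' t) =
        g' s + g' t - 2 * sInf (g' '' Set.Icc (min s t) (max s t))) →
      ∃! R : T' → T, Isometry R ∧ Function.Surjective R ∧
        ∀ s : ℝ, 0 ≤ s → s ≤ ζ → R (p' s) = p (bar (s₀ + s))) := by
  obtain rfl : bar = toIcoMod hζ_pos 0 :=
    funext fun r => (hbar r).trans (toIcoMod_zero_eq_sub_mul_floor hζ_pos r).symm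
  obtain rfl : g' = reroot g hζ_pos s₀ :=
    funext fun s => (hg' s).trans (reroot_apply g hζ_pos s₀ s).symm
  exact stmt14_general hg_cont hg_nonneg hζ_pos
    (hζ ▸ support_subset_Icc_sSup hg_neg hg_supp) ⟨hs₀, hs₀'.le⟩
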